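/- Let G be a ring graph with at least one edge. Then m(G) = 2 if every induced cycle of G has even length; m(G) = 3 if G contains no triangle but has an induced cycle of odd length; and m(G) = 4 if G contains a triangle. (Equivalently, reg K[G] equals |E| − 1, |E| − 2, |E| − 3 in the three cases, respectively.) -/

import Mathlib

/-!
Lower bounds come from linear functionals that are nonnegative on all cuts, hence strictly positive
on the interior of the cone (`pos_of_mem_interior`). The functionals `x_e` and `α - x_e` force
`0 < x_e < α`, so `α ≥ 2`. For `α = 2` all coordinates equal `1`, which is impossible on an odd
cycle because cuts meet cycles evenly. On a triangle the three strict triangle inequalities, the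
strict inequality `x₁ + x₂ + x₃ < 2α` and the parity of `x₁ + x₂ + x₃` give `α ≥ 4`.

For the upper bounds, the average of all cuts is `(1/2, …, 1/2)`, and a strictly positive
combination of all generators is interior since the generators span
(`const_mem_interior`). Hence `(1, …, 1; 2)` and `(2, …, 2; 4)` are interior for every graph.
The first lies in the monoid when `G` is bipartite, and the second when `G` is `3`-colourable, since
the three colour classes cut each edge twice. If `G` moreover maps homomorphically to the `5`-cycle,
the pullback of its five maximum cuts gives `(4, …, 4; 5)` in the cone, and `(2, …, 2; 3)` is
interior as a positive combination of this point and the centre.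

The required homomorphisms to the cycles on `ZMod 2`, `ZMod 3` and `ZMod 5` exist by induction
on the construction of ring graphs (`hasCyclicHom_of_isRingGraph`): the automorphisms `z ↦ ±z + t`
act transitively on vertices and on oriented edges, so homomorphisms of the summands can be made to
agree on a common vertex or edge, and the summands are induced subgraphs, so only induced cycles
have to be mapped.
-/

/-! Basic definitions for cut monoids of finite simple graphs. -/

open Classical in
/-- The cut vector of a vertex set `A`, as a function on `Sym2 V`:
value `1` on pairs with exactly one element in `A`, and `0` otherwise. -/
noncomputable def cutVec {V : Type} (A : Set V) : Sym2 V → ℤ :=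
  Sym2.lift ⟨fun v w => if ((v ∈ A) ↔ (w ∈ A)) then 0 else 1,
    fun v w => if_congr iff_comm rfl rfl⟩

variable {V : Type}

/-- The generators `(δ_A, 1)` of the cut monoid of `G`. -/
def cutGens (G : SimpleGraph V) : Set ((G.edgeSet → ℤ) × ℤ) :=
  {p | ∃ A : Set V, p = (fun e => cutVec A e.1, 1)}

/-- The cut monoid `M_G` of a graph `G`. -/
def cutMonoid (G : SimpleGraph V) : AddSubmonoid ((G.edgeSet → ℤ) × ℤ) :=
  AddSubmonoid.closure (cutGens G)

/-- The group `gp(M_G)` generated by the cut monoid. -/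
def cutGroup (G : SimpleGraph V) : AddSubgroup ((G.edgeSet → ℤ) × ℤ) :=
  AddSubgroup.closure (cutGens G)

/-- `M_G` is normal: every `x ∈ gp(M_G)` with `n • x ∈ M_G` for some `n ≥ 1` lies in `M_G`. -/
def CutNormal (G : SimpleGraph V) : Prop :=
  ∀ x ∈ cutGroup G, (∃ n : ℕ, 1 ≤ n ∧ n • x ∈ cutMonoid G) → x ∈ cutMonoid G

/-- `M_G` is seminormal: every `x ∈ gp(M_G)` with `2 • x ∈ M_G` and `3 • x ∈ M_G`
lies in `M_G`. -/
def CutSeminormal (G : SimpleGraph V) : Prop :=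
  ∀ x ∈ cutGroup G, 2 • x ∈ cutMonoid G → 3 • x ∈ cutMonoid G → x ∈ cutMonoid G

/-- Generators of the cone of `M_G`: nonnegative real multiples of the `(δ_A, 1)`. -/
noncomputable def cutConeGens (G : SimpleGraph V) : Set ((G.edgeSet → ℝ) × ℝ) :=
  {q | ∃ (c : ℝ) (A : Set V), 0 ≤ c ∧
    q = c • ((fun e => ((cutVec A e.1 : ℤ) : ℝ), (1 : ℝ)))}

/-- The cone `cone(M_G)`: all finite nonnegative real combinations of the `(δ_A, 1)`. -/
noncomputable def cutCone (G : SimpleGraph V) : Set ((G.edgeSet → ℝ) × ℝ) :=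
  (AddSubmonoid.closure (cutConeGens G) : Set ((G.edgeSet → ℝ) × ℝ))

/-- The canonical map from `ℤ^E × ℤ` to `ℝ^E × ℝ`. -/
noncomputable def toRealCut (G : SimpleGraph V) (p : (G.edgeSet → ℤ) × ℤ) :
    (G.edgeSet → ℝ) × ℝ :=
  (fun e => ((p.1 e : ℤ) : ℝ), ((p.2 : ℤ) : ℝ))

/-- `int(M_G)`: elements of `M_G` mapping into the topological interior of `cone(M_G)`. -/
noncomputable def cutInterior (G : SimpleGraph V) : Set ((G.edgeSet → ℤ) × ℤ) :=
  {p | p ∈ cutMonoid G ∧ toRealCut G p ∈ interior (cutCone G)}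

/-- The set of last coordinates `α ∈ ℕ` realized by elements of `int(M_G)`;
its least element is `m(G)`. -/
noncomputable def cutDegrees (G : SimpleGraph V) : Set ℕ :=
  {α | ∃ x : G.edgeSet → ℤ, ((x, (α : ℤ)) : (G.edgeSet → ℤ) × ℤ) ∈ cutInterior G}

/-- `H` is a minor of `G`: branch sets `B u` are nonempty, pairwise disjoint,
induce connected subgraphs, and edges of `H` are witnessed by edges of `G`. -/
def GraphMinor {W V : Type} (H : SimpleGraph W) (G : SimpleGraph V) : Prop :=
  ∃ B : W → Set V,
    (∀ u, (B u).Nonempty) ∧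
    (∀ u v, u ≠ v → Disjoint (B u) (B v)) ∧
    (∀ u, (G.induce (B u)).Connected) ∧
    (∀ u v, H.Adj u v → ∃ a ∈ B u, ∃ b ∈ B v, G.Adj a b)

/-- `G` is `K₅`-minor-free. -/
def K5Free (G : SimpleGraph V) : Prop :=
  ¬ GraphMinor (⊤ : SimpleGraph (Fin 5)) G

/-- `G` is bipartite: vertices split into two parts so every edge joins the parts. -/
def BipartiteG (G : SimpleGraph V) : Prop :=
  ∃ s : Set V, ∀ ⦃v w⦄, G.Adj v w → ((v ∈ s ∧ w ∉ s) ∨ (w ∈ s ∧ v ∉ s))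

/-- `G` has an induced cycle of length `n` (n ≥ 3): an induced-subgraph copy of the
cycle graph of length `n`. -/
def HasInducedCycleLen (G : SimpleGraph V) (n : ℕ) : Prop :=
  3 ≤ n ∧ Nonempty (SimpleGraph.cycleGraph n ↪g G)

/-- `G` contains a triangle. -/
def HasTriangle (G : SimpleGraph V) : Prop :=
  ∃ a b c, G.Adj a b ∧ G.Adj b c ∧ G.Adj a c

/-- `G` is chordal: every induced cycle is a triangle. -/
def ChordalG (G : SimpleGraph V) : Prop :=
  ∀ n, HasInducedCycleLen G n → n = 3

/-- `G` is bridgeless: every edge lies on some cycle. -/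
def BridgelessG (G : SimpleGraph V) : Prop :=
  ∀ e ∈ G.edgeSet, ∃ (v : V) (c : G.Walk v v), c.IsCycle ∧ e ∈ c.edges

/-- `G` is (isomorphic to) a cycle of length `n`. -/
def IsCycleOfLen (G : SimpleGraph V) (n : ℕ) : Prop :=
  3 ≤ n ∧ Nonempty (G ≃g SimpleGraph.cycleGraph n)

/-- `G` is a cycle. -/
def IsCycleGraph (G : SimpleGraph V) : Prop :=
  ∃ n, IsCycleOfLen G n

/-- `G` is a `0`-sum of `G1` and `G2`: copies of `G1`, `G2` cover `G`,
overlap in exactly one vertex, and every edge comes from `G1` or `G2`. -/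
def IsZeroSumDecomp {V1 V2 : Type} (G : SimpleGraph V) (G1 : SimpleGraph V1)
    (G2 : SimpleGraph V2) : Prop :=
  ∃ (f1 : V1 ↪ V) (f2 : V2 ↪ V),
    Set.range f1 ∪ Set.range f2 = Set.univ ∧
    (∃ v, Set.range f1 ∩ Set.range f2 = {v}) ∧
    (∀ a b, G.Adj a b ↔
      ((∃ x y, f1 x = a ∧ f1 y = b ∧ G1.Adj x y) ∨
       (∃ x y, f2 x = a ∧ f2 y = b ∧ G2.Adj x y)))

/-- `G` is a `1`-sum of `G1` and `G2` along a common edge. -/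
def IsOneSumDecomp {V1 V2 : Type} (G : SimpleGraph V) (G1 : SimpleGraph V1)
    (G2 : SimpleGraph V2) : Prop :=
  ∃ (f1 : V1 ↪ V) (f2 : V2 ↪ V) (v w : V),
    v ≠ w ∧
    Set.range f1 ∪ Set.range f2 = Set.univ ∧
    Set.range f1 ∩ Set.range f2 = {v, w} ∧
    (∃ x y, f1 x = v ∧ f1 y = w ∧ G1.Adj x y) ∧
    (∃ x y, f2 x = v ∧ f2 y = w ∧ G2.Adj x y) ∧
    (∀ a b, G.Adj a b ↔
      ((∃ x y, f1 x = a ∧ f1 y = b ∧ G1.Adj x y) ∨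
       (∃ x y, f2 x = a ∧ f2 y = b ∧ G2.Adj x y)))

/-- Ring graphs: obtained, up to adding isolated vertices, from finitely many
(finite) trees and cycles by iterated `0`-sums and `1`-sums. -/
inductive IsRingGraph : {V : Type} → SimpleGraph V → Prop
  | tree {V : Type} (G : SimpleGraph V) :
      Finite V → G.Connected → G.IsAcyclic → IsRingGraph G
  | cycle {V : Type} (G : SimpleGraph V) : IsCycleGraph G → IsRingGraph G
  | zeroSum {V1 V2 V : Type} {G1 : SimpleGraph V1} {G2 : SimpleGraph V2}
      {G : SimpleGraph V} :
      IsRingGraph G1 → IsRingGraph G2 → IsZeroSumDecomp G G1 G2 → IsRingGraph G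
  | oneSum {V1 V2 V : Type} {G1 : SimpleGraph V1} {G2 : SimpleGraph V2}
      {G : SimpleGraph V} :
      IsRingGraph G1 → IsRingGraph G2 → IsOneSumDecomp G G1 G2 → IsRingGraph G
  | addIsolated {V W : Type} {G : SimpleGraph V} {H : SimpleGraph W} (f : V ↪ W) :
      IsRingGraph G → (∀ a b, H.Adj a b ↔ ∃ x y, f x = a ∧ f y = b ∧ G.Adj x y) →
      IsRingGraph H

/-- An edge of an induced subgraph is an edge of the ambient graph. -/
lemma induce_edge_mem (G : SimpleGraph V) (s : Set V) (e : Sym2 s)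
    (he : e ∈ (G.induce s).edgeSet) : e.map Subtype.val ∈ G.edgeSet := by
  induction e using Sym2.ind with
  | _ a b =>
    rw [Sym2.map_pair_eq, SimpleGraph.mem_edgeSet]
    exact he

/-- Restriction of a vector indexed by the edges of `G` to the edges of the
subgraph of `G` induced on `s`. -/
noncomputable def restrictCut (G : SimpleGraph V) (s : Set V) (p : G.edgeSet → ℤ) :
    (G.induce s).edgeSet → ℤ :=
  fun e => p ⟨e.1.map Subtype.val, induce_edge_mem G s e.1 e.2⟩

/-! ### Homomorphisms from ring graphs to cycles -/

/-- `G` has a homomorphism to the cycle on `ZMod m`: adjacent vertices receive values that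
differ by `±1`. For `m = 2` and `m = 3` this is a proper colouring with `m` colours. -/
def HasCyclicHom {V : Type} (m : ℕ) (G : SimpleGraph V) : Prop :=
  ∃ c : V → ZMod m, ∀ a b, G.Adj a b → c a - c b = 1 ∨ c b - c a = 1

lemma hasCyclicHom_cycleGraph_of_walk {m n : ℕ} (g : ℕ → ZMod m)
    (hstep : ∀ i, g (i + 1) - g i = 1 ∨ g i - g (i + 1) = 1)
    (hclose : g 0 - g (n - 1) = 1 ∨ g (n - 1) - g 0 = 1) :
    HasCyclicHom m (SimpleGraph.cycleGraph n) := by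
  have key : ∀ u v : Fin n, (u - v).val = 1 →
      g u.val - g v.val = 1 ∨ g v.val - g u.val = 1 := by
    intro u v h
    rw [Fin.sub_def] at h
    simp only at h
    have hu := u.2
    have hv := v.2
    rcases lt_or_ge (n - v.val + u.val) n with hlt | hge
    · rw [Nat.mod_eq_of_lt hlt] at h
      have h0 : u.val = 0 := by omega
      have h1 : v.val = n - 1 := by omega
      rw [h0, h1]
      exact hclose
    · rw [Nat.mod_eq_sub_mod hge, Nat.mod_eq_of_lt (by omega)] at h
      have h1 : u.val = v.val + 1 := by omega
      rw [h1]
      exact hstep _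
  refine ⟨fun u => g u.val, fun a b hab => ?_⟩
  rcases SimpleGraph.cycleGraph_adj'.1 hab with h | h
  · exact key a b h
  · exact (key b a h).symm

lemma hasCyclicHom_cycleGraph_even {m n : ℕ} (hn : 1 ≤ n) (he : Even n) :
    HasCyclicHom m (SimpleGraph.cycleGraph n) := by
  refine hasCyclicHom_cycleGraph_of_walk (fun i => if Even i then 0 else 1) ?_ ?_
  · intro i
    by_cases h : Even i <;> simp [h, Nat.even_add_one]
  · have : ¬ Even (n - 1) := by grind
    simp [this]

/-- A cycle of odd length `n ≥ m`, `m` odd, winds once around the cycle on `ZMod m`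
and then moves back and forth along its last edge. -/
lemma hasCyclicHom_cycleGraph_odd {m n : ℕ} (hm : Odd m) (hm3 : 3 ≤ m) (hmn : m ≤ n)
    (ho : Odd n) : HasCyclicHom m (SimpleGraph.cycleGraph n) := by
  refine hasCyclicHom_cycleGraph_of_walk
    (fun i => if i < m - 1 then (i : ZMod m) else if Even i then -1 else -2) ?_ ?_
  · intro i
    rcases lt_trichotomy (i + 1) (m - 1) with h | h | h
    · left
      have h' : i < m - 1 := by omega
      simp [h, h']
    · left
      have h' : i < m - 1 := by omega
      have he : Even (i + 1) := by rw [h]; grind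
      have hi : (i : ZMod m) = -2 := by
        have : ((i + 2 : ℕ) : ZMod m) = 0 := by
          rw [show i + 2 = m by omega]; simp
        push_cast at this
        linear_combination this
      simp [h, h', h ▸ he, hi]
      norm_num
    · have h1 : ¬ i + 1 < m - 1 := by omega
      have h2 : ¬ i < m - 1 := by omega
      by_cases he : Even i
      · right; simp [h1, h2, he, Nat.even_add_one]; norm_num
      · left; simp [h1, h2, he, Nat.even_add_one]; norm_num
  · left
    have h1 : ¬ n - 1 < m - 1 := by omega
    have h2 : Even (n - 1) := by grind
    have h3 : 0 < m - 1 := by omega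
    simp [h1, h2, h3]

lemma HasCyclicHom.comap {V W : Type} {m : ℕ} {G : SimpleGraph V} {H : SimpleGraph W}
    (h : HasCyclicHom m H) (f : G →g H) : HasCyclicHom m G := by
  obtain ⟨c, hc⟩ := h
  exact ⟨fun v => c (f v), fun a b hab => hc _ _ (f.map_rel hab)⟩

lemma HasInducedCycleLen.map {V W : Type} {n : ℕ} {G : SimpleGraph V} {H : SimpleGraph W}
    (h : HasInducedCycleLen G n) (f : G ↪g H) : HasInducedCycleLen H n :=
  ⟨h.1, h.2.map fun e => f.comp e⟩

lemma exists_common_extension {X Y Z α : Type} [Nonempty α] (f1 : X ↪ Z) (f2 : Y ↪ Z)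
    (c1 : X → α) (c2 : Y → α) (h : ∀ x y, f1 x = f2 y → c1 x = c2 y) :
    ∃ c : Z → α, (∀ x, c (f1 x) = c1 x) ∧ ∀ y, c (f2 y) = c2 y := by
  classical
  let c0 : Z → α := Function.extend f2 c2 (fun _ => Classical.arbitrary α)
  refine ⟨Function.extend f1 c1 c0, fun x => f1.injective.extend_apply _ _ _, fun y => ?_⟩
  by_cases hy : ∃ x, f1 x = f2 y
  · obtain ⟨x, hx⟩ := hy
    rw [← hx, f1.injective.extend_apply]
    exact h x y hx
  · rw [Function.extend_apply' _ _ _ hy]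
    exact f2.injective.extend_apply _ _ _

/-- The symmetries `z ↦ s * z + t` of the cycle on `ZMod m`, where `s = ±1`, act on its
homomorphisms; they are transitive on ordered pairs of adjacent points, which is what makes
gluing along a vertex or an edge possible. -/
lemma cyclic_step_affine {m : ℕ} {s t x y : ZMod m} (hs : s = 1 ∨ s = -1)
    (h : x - y = 1 ∨ y - x = 1) :
    (s * x + t) - (s * y + t) = 1 ∨ (s * y + t) - (s * x + t) = 1 := by
  rcases hs with rfl | rfl
  · rcases h with h | h
    · left; linear_combination h
    · right; linear_combination h
  · rcases h with h | h
    · right; linear_combination h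
    · left; linear_combination h

lemma hasCyclicHom_of_glue {V1 V2 V : Type} {m : ℕ} {G1 : SimpleGraph V1}
    {G2 : SimpleGraph V2} {G : SimpleGraph V} (f1 : V1 ↪ V) (f2 : V2 ↪ V)
    (hG : ∀ a b, G.Adj a b ↔
      ((∃ x y, f1 x = a ∧ f1 y = b ∧ G1.Adj x y) ∨
       (∃ x y, f2 x = a ∧ f2 y = b ∧ G2.Adj x y)))
    (c1 : V1 → ZMod m) (hc1 : ∀ a b, G1.Adj a b → c1 a - c1 b = 1 ∨ c1 b - c1 a = 1)
    (c2 : V2 → ZMod m) (hc2 : ∀ a b, G2.Adj a b → c2 a - c2 b = 1 ∨ c2 b - c2 a = 1)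
    (s t : ZMod m) (hs : s = 1 ∨ s = -1)
    (hagree : ∀ x y, f1 x = f2 y → c1 x = s * c2 y + t) : HasCyclicHom m G := by
  obtain ⟨c, h1, h2⟩ := exists_common_extension f1 f2 c1 (fun y => s * c2 y + t) hagree
  refine ⟨c, fun a b hab => ?_⟩
  rcases (hG a b).1 hab with ⟨x, y, rfl, rfl, hxy⟩ | ⟨x, y, rfl, rfl, hxy⟩
  · rw [h1, h1]; exact hc1 _ _ hxy
  · rw [h2, h2]; exact cyclic_step_affine hs (hc2 _ _ hxy)

/-- The first summand is an induced subgraph as soon as edges of the second summand inside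
the overlap are edges of the first. -/
def glueEmbedding {V1 V2 V : Type} {G1 : SimpleGraph V1}
    {G2 : SimpleGraph V2} {G : SimpleGraph V} (f1 : V1 ↪ V) (f2 : V2 ↪ V)
    (hG : ∀ a b, G.Adj a b ↔
      ((∃ x y, f1 x = a ∧ f1 y = b ∧ G1.Adj x y) ∨
       (∃ x y, f2 x = a ∧ f2 y = b ∧ G2.Adj x y)))
    (h : ∀ x y x' y', f1 x = f2 x' → f1 y = f2 y' → G2.Adj x' y' → G1.Adj x y) :
    G1 ↪g G where
  toEmbedding := f1
  map_rel_iff' := by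
    intro a b
    constructor
    · intro hab
      rcases (hG _ _).1 hab with ⟨x, y, hx, hy, hxy⟩ | ⟨x, y, hx, hy, hxy⟩
      · rwa [← f1.injective hx, ← f1.injective hy]
      · exact h _ _ _ _ hx.symm hy.symm hxy
    · exact fun hab => (hG _ _).2 (Or.inl ⟨a, b, rfl, rfl, hab⟩)

/-- A ring graph maps to the cycle on `ZMod m` as soon as each of its induced cycles does. -/
lemma hasCyclicHom_of_isRingGraph {V : Type} {m : ℕ} {G : SimpleGraph V}
    (hring : IsRingGraph G)
    (hcyc : ∀ n, HasInducedCycleLen G n → HasCyclicHom m (SimpleGraph.cycleGraph n)) :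
    HasCyclicHom m G := by
  induction hring with
  | tree G _ _ hG =>
    have C := hG.coloringTwo
    refine ⟨fun v => if C v = 0 then 0 else 1, fun a b hab => ?_⟩
    have := C.valid hab
    have e : ∀ i j : Fin 2, i ≠ j → (i = 0 ∧ j ≠ 0) ∨ (i ≠ 0 ∧ j = 0) := by decide
    rcases e _ _ this with ⟨h1, h2⟩ | ⟨h1, h2⟩
    · simp [h1, h2]
    · simp [h1, h2]
  | cycle G hG =>
    obtain ⟨n, hn, ⟨e⟩⟩ := hG
    exact (hcyc n ⟨hn, ⟨e.symm.toEmbedding⟩⟩).comap e.toHom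
  | @zeroSum V1 V2 V G1 G2 G _ _ hd ih1 ih2 =>
    obtain ⟨f1, f2, -, ⟨v, hv⟩, hG⟩ := hd
    have hover : ∀ x y, f1 x = f2 y → f1 x = v := by
      intro x y hxy
      have : f1 x ∈ Set.range f1 ∩ Set.range f2 := ⟨⟨x, rfl⟩, ⟨y, hxy.symm⟩⟩
      rw [hv] at this
      exact this
    have e1 : G1 ↪g G := glueEmbedding f1 f2 hG (by
      intro x y x' y' hx hy hadj
      have hxy : f2 x' = f2 y' := by rw [← hx, ← hy, hover _ _ hx, hover _ _ hy]
      exact absurd (f2.injective hxy) hadj.ne)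
    have e2 : G2 ↪g G := glueEmbedding f2 f1 (fun a b => (hG a b).trans or_comm) (by
      intro x y x' y' hx hy hadj
      have hxy : f1 x' = f1 y' := by rw [hover _ _ hx.symm, hover _ _ hy.symm]
      exact absurd (f1.injective hxy) hadj.ne)
    obtain ⟨c1, hc1⟩ := ih1 fun n hn => hcyc n (hn.map e1)
    obtain ⟨c2, hc2⟩ := ih2 fun n hn => hcyc n (hn.map e2)
    have hvm : v ∈ Set.range f1 ∩ Set.range f2 := by rw [hv]; rfl
    obtain ⟨⟨p, hp⟩, ⟨q, hq⟩⟩ := hvm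
    refine hasCyclicHom_of_glue f1 f2 hG c1 hc1 c2 hc2 1 (c1 p - c2 q) (Or.inl rfl) ?_
    intro x y hxy
    have hx := hover x y hxy
    have : x = p := f1.injective (hx.trans hp.symm)
    have : y = q := f2.injective ((hxy.symm.trans hx).trans hq.symm)
    subst_vars
    ring
  | @oneSum V1 V2 V G1 G2 G _ _ hd ih1 ih2 =>
    obtain ⟨f1, f2, v, w, hvw, -, hv, ⟨p, p', hp, hp', hpp⟩, ⟨q, q', hq, hq', hqq⟩, hG⟩ := hd
    have hover : ∀ x y, f1 x = f2 y → (x = p ∧ y = q) ∨ (x = p' ∧ y = q') := by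
      intro x y hxy
      have : f1 x ∈ Set.range f1 ∩ Set.range f2 := ⟨⟨x, rfl⟩, ⟨y, hxy.symm⟩⟩
      rw [hv] at this
      rcases this with h | h
      · exact Or.inl ⟨f1.injective (h.trans hp.symm),
          f2.injective ((hxy.symm.trans h).trans hq.symm)⟩
      · exact Or.inr ⟨f1.injective (h.trans hp'.symm),
          f2.injective ((hxy.symm.trans h).trans hq'.symm)⟩
    have e1 : G1 ↪g G := glueEmbedding f1 f2 hG (by
      intro x y x' y' hx hy hadj
      rcases hover _ _ hx with ⟨rfl, rfl⟩ | ⟨rfl, rfl⟩ <;>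
        rcases hover _ _ hy with ⟨rfl, rfl⟩ | ⟨rfl, rfl⟩
      · exact absurd rfl hadj.ne
      · exact hpp
      · exact hpp.symm
      · exact absurd rfl hadj.ne)
    have e2 : G2 ↪g G := glueEmbedding f2 f1 (fun a b => (hG a b).trans or_comm) (by
      intro x y x' y' hx hy hadj
      rcases hover _ _ hx.symm with ⟨rfl, rfl⟩ | ⟨rfl, rfl⟩ <;>
        rcases hover _ _ hy.symm with ⟨rfl, rfl⟩ | ⟨rfl, rfl⟩
      · exact absurd rfl hadj.ne
      · exact hqq
      · exact hqq.symm
      · exact absurd rfl hadj.ne)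
    obtain ⟨c1, hc1⟩ := ih1 fun n hn => hcyc n (hn.map e1)
    obtain ⟨c2, hc2⟩ := ih2 fun n hn => hcyc n (hn.map e2)
    -- `s` is the symmetry aligning the two directions in which the common edge is traversed.
    have hs : ∃ s : ZMod m, (s = 1 ∨ s = -1) ∧ c1 p' - c1 p = s * (c2 q' - c2 q) := by
      rcases hc1 _ _ hpp with h | h <;> rcases hc2 _ _ hqq with h' | h'
      · exact ⟨1, Or.inl rfl, by linear_combination h' - h⟩
      · exact ⟨-1, Or.inr rfl, by linear_combination h' - h⟩
      · exact ⟨-1, Or.inr rfl, by linear_combination h - h'⟩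
      · exact ⟨1, Or.inl rfl, by linear_combination h - h'⟩
    obtain ⟨s, hs, hs'⟩ := hs
    refine hasCyclicHom_of_glue f1 f2 hG c1 hc1 c2 hc2 s (c1 p - s * c2 q) hs ?_
    intro x y hxy
    rcases hover x y hxy with ⟨rfl, rfl⟩ | ⟨rfl, rfl⟩
    · ring
    · linear_combination hs'
  | @addIsolated V W G H f _ hH ih =>
    have e : G ↪g H :=
      { toEmbedding := f
        map_rel_iff' := by
          intro a b
          constructor
          · intro hab
            obtain ⟨x, y, hx, hy, hxy⟩ := (hH _ _).1 hab
            rwa [← f.injective hx, ← f.injective hy]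
          · exact fun hab => (hH _ _).2 ⟨a, b, rfl, rfl, hab⟩ }
    obtain ⟨c, hc⟩ := ih fun n hn => hcyc n (hn.map e)
    refine ⟨Function.extend f c 0, fun a b hab => ?_⟩
    obtain ⟨x, y, rfl, rfl, hxy⟩ := (hH _ _).1 hab
    rw [f.injective.extend_apply, f.injective.extend_apply]
    exact hc _ _ hxy

/-! ### Cut vectors and the interior of the cut cone -/

open Classical in
lemma cutVec_mk {V : Type} (A : Set V) (a b : V) :
    cutVec A s(a, b) = if (a ∈ A ↔ b ∈ A) then 0 else 1 := rfl

lemma cutVec_eq_zero_or_one {V : Type} (A : Set V) (e : Sym2 V) :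
    cutVec A e = 0 ∨ cutVec A e = 1 := by
  induction e using Sym2.ind with
  | _ a b => rw [cutVec_mk]; split_ifs <;> simp

lemma cutVec_empty {V : Type} (e : Sym2 V) : cutVec (∅ : Set V) e = 0 := by
  induction e using Sym2.ind with
  | _ a b => simp [cutVec_mk]

/-- The ray generator `(δ_A, 1)` of the cone, as a real vector. -/
noncomputable def realGen {V : Type} (G : SimpleGraph V) (A : Set V) :
    (G.edgeSet → ℝ) × ℝ :=
  (fun e => ((cutVec A e.1 : ℤ) : ℝ), 1)

lemma smul_realGen_mem {V : Type} (G : SimpleGraph V) {c : ℝ} (hc : 0 ≤ c) (A : Set V) :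
    c • realGen G A ∈ AddSubmonoid.closure (cutConeGens G) :=
  AddSubmonoid.subset_closure ⟨c, A, hc, rfl⟩

open Classical in
/-- Inclusion-exclusion on pairs of distinct vertices: `δ_{v} + δ_{w} - δ_{vw}`
is twice the indicator of `vw`. -/
lemma cutVec_edge_indicator {V : Type} {v w a b : V} (hvw : v ≠ w) (hab : a ≠ b) :
    cutVec {v} s(a, b) + cutVec {w} s(a, b) - cutVec {v, w} s(a, b) =
      if s(a, b) = s(v, w) then 2 else 0 := by
  simp only [cutVec_mk, Set.mem_singleton_iff, Set.mem_insert_iff, Sym2.eq_iff]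
  by_cases h1 : a = v <;> by_cases h2 : a = w <;> by_cases h3 : b = v <;>
    by_cases h4 : b = w <;> simp_all

lemma span_realGen {V : Type} [Finite V] (G : SimpleGraph V) :
    Submodule.span ℝ (Set.range (realGen G)) = ⊤ := by
  classical
  have := Fintype.ofFinite V
  have := Fintype.ofFinite G.edgeSet
  have hgen : ∀ A, realGen G A ∈ Submodule.span ℝ (Set.range (realGen G)) :=
    fun A => Submodule.subset_span ⟨A, rfl⟩
  have h0 : ((0, 1) : (G.edgeSet → ℝ) × ℝ) ∈ Submodule.span ℝ (Set.range (realGen G)) := by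
    convert hgen ∅ using 1
    ext e <;> simp [realGen, cutVec_empty]
  have h1 : ∀ e : G.edgeSet, ((Pi.single e 1, 0) : (G.edgeSet → ℝ) × ℝ) ∈
      Submodule.span ℝ (Set.range (realGen G)) := by
    rintro ⟨e, he⟩
    induction e using Sym2.ind with
    | _ v w =>
      have hvw : v ≠ w := SimpleGraph.Adj.ne he
      convert Submodule.smul_mem _ (1 / 2 : ℝ) (Submodule.sub_mem _ (Submodule.sub_mem _
        (Submodule.add_mem _ (hgen {v}) (hgen {w})) (hgen {v, w})) (hgen ∅)) using 1
      refine Prod.ext (funext ?_) ?_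
      · rintro ⟨e', he'⟩
        induction e' using Sym2.ind with
        | _ a b =>
          have key := cutVec_edge_indicator hvw (SimpleGraph.Adj.ne he')
          have key' := congrArg (Int.cast : ℤ → ℝ) key
          push_cast at key'
          simp only [realGen, Prod.smul_fst, Prod.fst_sub, Prod.fst_add, Pi.smul_apply,
            Pi.sub_apply, Pi.add_apply, smul_eq_mul, cutVec_empty, Pi.single_apply,
            Subtype.mk.injEq]
          rw [key']
          split_ifs <;> norm_num
      · simp [realGen]
  rw [eq_top_iff]
  rintro ⟨x, α⟩ -
  have hx : ((x, α) : (G.edgeSet → ℝ) × ℝ) =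
      ∑ e, x e • ((Pi.single e 1, 0) : (G.edgeSet → ℝ) × ℝ) + α • (0, 1) := by
    refine Prod.ext (funext fun e => ?_) ?_
    · simp [Prod.fst_sum, Finset.sum_apply, Pi.single_apply]
    · simp [Prod.snd_sum]
  rw [hx]
  exact Submodule.add_mem _ (Submodule.sum_mem _ fun e _ => Submodule.smul_mem _ _ (h1 e))
    (Submodule.smul_mem _ _ h0)

/-- Strictly positive combinations of all the generators are interior: they form the image of
the open positive orthant under a surjective linear map. -/
lemma sum_realGen_mem_interior {V : Type} [Fintype V] (G : SimpleGraph V) [Fintype (Set V)]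
    (c : Set V → ℝ) (hc : ∀ A, 0 < c A) :
    ∑ A, c A • realGen G A ∈ interior (cutCone G) := by
  have hsurj : Function.Surjective (Fintype.linearCombination ℝ (realGen G)) := by
    rw [← LinearMap.range_eq_top, Fintype.range_linearCombination, span_realGen]
  have hopen := LinearMap.isOpenMap_of_finiteDimensional _ hsurj
  have hU : IsOpen {c : Set V → ℝ | ∀ A, 0 < c A} := by
    simp only [Set.ofPred_forall]
    exact isOpen_iInter_of_finite fun A => isOpen_lt continuous_const (continuous_apply A)
  refine interior_maximal ?_ (hopen _ hU) ⟨c, hc, by simp [Fintype.linearCombination_apply]⟩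
  rintro _ ⟨d, hd, rfl⟩
  rw [Fintype.linearCombination_apply]
  exact sum_mem fun A _ => smul_realGen_mem G (hd A).le A

/-- The centre of the cone: every edge is cut by exactly half of the vertex sets, so `(1/2, 1)`
and its positive multiples are interior. -/
lemma const_mem_interior {V : Type} [Fintype V] (G : SimpleGraph V) {t : ℝ} (ht : 0 < t) :
    ((fun _ => t / 2, t) : (G.edgeSet → ℝ) × ℝ) ∈ interior (cutCone G) := by
  classical
  have hN : (0 : ℝ) < Fintype.card (Set V) := by exact_mod_cast Fintype.card_pos
  convert sum_realGen_mem_interior G (fun _ => t / Fintype.card (Set V))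
    (fun _ => by positivity) using 1
  rw [← Finset.smul_sum]
  refine Prod.ext (funext ?_) ?_
  · rintro ⟨e, he⟩
    induction e using Sym2.ind with
    | _ v w =>
      have hvw : v ≠ w := SimpleGraph.Adj.ne he
      have hinv : Function.Involutive fun A : Set V => symmDiff A {v} := fun A => by simp
      -- Toggling membership of the endpoint `v` exchanges sets cutting `vw` with the others.
      have htog : ∀ A : Set V, (cutVec (symmDiff A {v}) s(v, w) : ℝ) =
          1 - (cutVec A s(v, w) : ℝ) := by
        intro A
        simp only [cutVec_mk, Set.mem_symmDiff, Set.mem_singleton_iff]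
        by_cases h1 : v ∈ A <;> by_cases h2 : w ∈ A <;> simp [h1, h2, hvw.symm]
      have hsum : ∑ A : Set V, (cutVec A s(v, w) : ℝ) =
          ∑ A : Set V, (1 - (cutVec A s(v, w) : ℝ)) := by
        rw [← Equiv.sum_comp hinv.toPerm]
        exact Finset.sum_congr rfl fun A _ => htog A
      rw [Finset.sum_sub_distrib, Finset.sum_const, Finset.card_univ, nsmul_eq_mul,
        mul_one] at hsum
      have hval : ∑ A : Set V, (cutVec A s(v, w) : ℝ) = Fintype.card (Set V) / 2 := by
        linarith
      simp only [Prod.smul_fst, Pi.smul_apply, Prod.fst_sum, Finset.sum_apply, realGen,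
        smul_eq_mul]
      rw [hval]
      field_simp
  · simp only [Prod.smul_snd, Prod.snd_sum, realGen, Finset.sum_const, Finset.card_univ,
      nsmul_eq_mul, smul_eq_mul, mul_one]
    field_simp

lemma add_mem_interior {V : Type} (G : SimpleGraph V) {p q : (G.edgeSet → ℝ) × ℝ}
    (hp : p ∈ interior (cutCone G)) (hq : q ∈ cutCone G) : p + q ∈ interior (cutCone G) := by
  have hopen := (Homeomorph.addRight q).isOpenMap _ (isOpen_interior (s := cutCone G))
  refine interior_maximal ?_ hopen ⟨p, hp, rfl⟩
  rintro _ ⟨r, hr, rfl⟩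
  exact AddSubmonoid.add_mem _ (interior_subset hr) hq

/-- A linear functional that is nonnegative on all cuts and not identically zero is strictly
positive on the interior of the cone. -/
lemma pos_of_mem_interior {V : Type} (G : SimpleGraph V)
    (l : ((G.edgeSet → ℝ) × ℝ) →L[ℝ] ℝ) (hl : l ≠ 0)
    (hgen : ∀ A, 0 ≤ l (realGen G A)) {p : (G.edgeSet → ℝ) × ℝ}
    (hp : p ∈ interior (cutCone G)) : 0 < l p := by
  have hnonneg : ∀ q ∈ cutCone G, 0 ≤ l q := by
    intro q hq
    refine AddSubmonoid.closure_induction ?_ ?_ ?_ hq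
    · rintro _ ⟨c, A, hc, rfl⟩
      rw [map_smul]
      exact mul_nonneg hc (hgen A)
    · simp
    · intro x y _ _ hx hy
      rw [map_add]
      exact add_nonneg hx hy
  have hopen := l.isOpenMap_of_ne_zero hl _ (isOpen_interior (s := cutCone G))
  have hsub : l '' interior (cutCone G) ⊆ Set.Ici 0 := by
    rintro _ ⟨q, hq, rfl⟩
    exact hnonneg q (interior_subset hq)
  have := interior_maximal hsub hopen ⟨p, hp, rfl⟩
  rwa [interior_Ici, Set.mem_Ioi] at this

/-! ### Lower bounds -/

/-- Coordinate `x_e` on the ambient space of the cone. -/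
noncomputable def edgeCoord {V : Type} (G : SimpleGraph V) (e : G.edgeSet) :
    ((G.edgeSet → ℝ) × ℝ) →L[ℝ] ℝ :=
  (ContinuousLinearMap.proj e).comp (ContinuousLinearMap.fst ℝ _ _)

/-- The degree coordinate `α` on the ambient space of the cone. -/
noncomputable def degCoord {V : Type} (G : SimpleGraph V) :
    ((G.edgeSet → ℝ) × ℝ) →L[ℝ] ℝ :=
  ContinuousLinearMap.snd ℝ _ _

@[simp] lemma edgeCoord_apply {V : Type} (G : SimpleGraph V) (e : G.edgeSet)
    (p : (G.edgeSet → ℝ) × ℝ) : edgeCoord G e p = p.1 e := rfl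

@[simp] lemma degCoord_apply {V : Type} (G : SimpleGraph V)
    (p : (G.edgeSet → ℝ) × ℝ) : degCoord G p = p.2 := rfl

lemma edge_bounds {V : Type} {G : SimpleGraph V} {x : G.edgeSet → ℤ} {α : ℤ}
    (h : (x, α) ∈ cutInterior G) (e : G.edgeSet) : 0 < x e ∧ x e < α := by
  classical
  constructor
  · have := pos_of_mem_interior G (edgeCoord G e) (fun h0 => by
      have := congrArg (fun l => l ((Pi.single e 1, 0) : (G.edgeSet → ℝ) × ℝ)) h0
      simp at this) (fun A => by
      rcases cutVec_eq_zero_or_one A e.1 with h | h <;> simp [realGen, h]) h.2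
    simpa [toRealCut] using this
  · have := pos_of_mem_interior G (degCoord G - edgeCoord G e) (fun h0 => by
      have := congrArg (fun l => l ((0, 1) : (G.edgeSet → ℝ) × ℝ)) h0
      simp at this) (fun A => by
      rcases cutVec_eq_zero_or_one A e.1 with h | h <;> simp [realGen, h]) h.2
    simpa [toRealCut] using this

/-- If every cut has even coordinate sum over a family of edges, then so does every element of
the monoid. -/
lemma even_sum_of_mem {V : Type} {G : SimpleGraph V} {ι : Type} [Fintype ι]
    (E : ι → G.edgeSet) (hE : ∀ A : Set V, Even (∑ i, cutVec A (E i).1))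
    {p : (G.edgeSet → ℤ) × ℤ} (hp : p ∈ cutMonoid G) : Even (∑ i, p.1 (E i)) := by
  refine AddSubmonoid.closure_induction ?_ ?_ ?_ hp
  · rintro _ ⟨A, rfl⟩
    exact hE A
  · simp
  · intro x y _ _ hx hy
    simpa [Finset.sum_add_distrib] using hx.add hy

/-- A cut meets a closed walk in an even number of edges. -/
lemma even_sum_cutVec_cyclic {V : Type} {n : ℕ} (g : Fin (n + 1) → V) (A : Set V) :
    Even (∑ i, cutVec A s(g i, g (i + 1))) := by
  classical
  let χ : V → ℤ := fun v => if v ∈ A then 1 else 0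
  have hmod : ∀ i, ∃ k : ℤ, cutVec A s(g i, g (i + 1)) = χ (g i) + χ (g (i + 1)) - 2 * k := by
    intro i
    refine ⟨χ (g i) * χ (g (i + 1)), ?_⟩
    simp only [cutVec_mk, χ]
    by_cases h1 : g i ∈ A <;> by_cases h2 : g (i + 1) ∈ A <;> simp [h1, h2]
  choose k hk using hmod
  have hshift : ∑ i, χ (g (i + 1)) = ∑ i, χ (g i) :=
    Equiv.sum_comp (Equiv.addRight (1 : Fin (n + 1))) fun i => χ (g i)
  simp only [hk, Finset.sum_sub_distrib, Finset.sum_add_distrib, hshift, ← Finset.mul_sum]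
  exact ⟨∑ i, χ (g i) - ∑ i, k i, by ring⟩

lemma two_le_of_mem_cutDegrees {V : Type} {G : SimpleGraph V} (hedge : G.edgeSet.Nonempty)
    {α : ℕ} (hα : α ∈ cutDegrees G) : 2 ≤ α := by
  obtain ⟨x, hx⟩ := hα
  obtain ⟨e, he⟩ := hedge
  have := edge_bounds hx ⟨e, he⟩
  omega

/-- In degree `2` an interior point has all coordinates `1`, violating parity on odd cycles. -/
lemma three_le_of_mem_cutDegrees {V : Type} {G : SimpleGraph V} {n : ℕ} (hn : Odd n)
    (hG : HasInducedCycleLen G n) {α : ℕ} (hα : α ∈ cutDegrees G) : 3 ≤ α := by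
  obtain ⟨x, hx⟩ := hα
  obtain ⟨hn3, ⟨f⟩⟩ := hG
  obtain ⟨k, rfl⟩ : ∃ k, n = k + 2 := ⟨n - 2, by omega⟩
  have hadj : ∀ i : Fin (k + 2), G.Adj (f i) (f (i + 1)) := fun i =>
    f.map_rel_iff.2 (SimpleGraph.cycleGraph_adj.2 (Or.inr (by simp)))
  let E : Fin (k + 2) → G.edgeSet := fun i => ⟨s(f i, f (i + 1)), hadj i⟩
  have heven := even_sum_of_mem E (fun A => even_sum_cutVec_cyclic (fun i => f i) A) hx.1
  by_contra hlt
  have hone : ∀ i, x (E i) = 1 := fun i => by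
    have := edge_bounds hx (E i)
    omega
  simp only [hone, Finset.sum_const, Finset.card_univ, Fintype.card_fin, nsmul_eq_mul,
    mul_one] at heven
  rw [Int.even_coe_nat] at heven
  exact (Nat.not_even_iff_odd.2 hn) heven

lemma four_le_of_mem_cutDegrees {V : Type} {G : SimpleGraph V} (hG : HasTriangle G)
    {α : ℕ} (hα : α ∈ cutDegrees G) : 4 ≤ α := by
  classical
  obtain ⟨x, hx⟩ := hα
  obtain ⟨a, b, c, hab, hbc, hac⟩ := hG
  let E : Fin 3 → G.edgeSet := ![⟨s(a, b), hab⟩, ⟨s(b, c), hbc⟩, ⟨s(a, c), hac⟩]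
  have hcut : ∀ A : Set V,
      (cutVec A (E 0).1 = 0 ∧ cutVec A (E 1).1 = 0 ∧ cutVec A (E 2).1 = 0) ∨
      (cutVec A (E 0).1 = 1 ∧ cutVec A (E 1).1 = 1 ∧ cutVec A (E 2).1 = 0) ∨
      (cutVec A (E 0).1 = 1 ∧ cutVec A (E 1).1 = 0 ∧ cutVec A (E 2).1 = 1) ∨
      (cutVec A (E 0).1 = 0 ∧ cutVec A (E 1).1 = 1 ∧ cutVec A (E 2).1 = 1) := by
    intro A
    simp only [E, Matrix.cons_val_zero, Matrix.cons_val_one, Matrix.cons_val, cutVec_mk]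
    by_cases h1 : a ∈ A <;> by_cases h2 : b ∈ A <;> by_cases h3 : c ∈ A <;> simp [h1, h2, h3]
  have heven := even_sum_of_mem E (fun A => by
    rw [Fin.sum_univ_three]
    rcases hcut A with ⟨h0, h1, h2⟩ | ⟨h0, h1, h2⟩ | ⟨h0, h1, h2⟩ | ⟨h0, h1, h2⟩ <;>
      rw [h0, h1, h2] <;> decide) hx.1
  rw [Fin.sum_univ_three] at heven
  have htri : ∀ i j k : Fin 3, i ≠ j → i ≠ k → j ≠ k → x (E i) < x (E j) + x (E k) := by
    intro i j k hij hik hjk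
    have := pos_of_mem_interior G (edgeCoord G (E j) + edgeCoord G (E k) - edgeCoord G (E i))
      (fun h0 => by
        have := congrArg (fun l => l (((fun _ => 1), 0) : (G.edgeSet → ℝ) × ℝ)) h0
        simp at this) (fun A => by
        rcases hcut A with ⟨h0, h1, h2⟩ | ⟨h0, h1, h2⟩ | ⟨h0, h1, h2⟩ | ⟨h0, h1, h2⟩ <;>
          fin_cases i <;> fin_cases j <;> fin_cases k <;> simp_all [realGen]) hx.2
    simp only [sub_apply, add_apply, edgeCoord_apply,
      toRealCut] at this
    have h' : (0 : ℤ) < x (E j) + x (E k) - x (E i) := by exact_mod_cast this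
    omega
  have hsum : x (E 0) + x (E 1) + x (E 2) < 2 * α := by
    have := pos_of_mem_interior G
      ((2 : ℝ) • degCoord G - (edgeCoord G (E 0) + edgeCoord G (E 1) + edgeCoord G (E 2)))
      (fun h0 => by
        have := congrArg (fun l => l ((0, 1) : (G.edgeSet → ℝ) × ℝ)) h0
        simp at this) (fun A => by
        rcases hcut A with ⟨h0, h1, h2⟩ | ⟨h0, h1, h2⟩ | ⟨h0, h1, h2⟩ | ⟨h0, h1, h2⟩ <;>
          simp [realGen, h0, h1, h2] <;> norm_num) hx.2
    simp only [sub_apply, add_apply, edgeCoord_apply,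
      smul_apply, degCoord_apply, smul_eq_mul, toRealCut] at this
    have h' : (0 : ℤ) < 2 * (α : ℤ) - (x (E 0) + x (E 1) + x (E 2)) := by exact_mod_cast this
    omega
  have t0 := htri 0 1 2 (by decide) (by decide) (by decide)
  have t1 := htri 1 0 2 (by decide) (by decide) (by decide)
  have t2 := htri 2 0 1 (by decide) (by decide) (by decide)
  obtain ⟨r, hr⟩ := heven
  simp only at hr
  omega

/-! ### Interior points of small degree -/

lemma cutGen_mem {V : Type} (G : SimpleGraph V) (A : Set V) :
    ((fun e => cutVec A e.1, 1) : (G.edgeSet → ℤ) × ℤ) ∈ cutMonoid G :=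
  AddSubmonoid.subset_closure ⟨A, rfl⟩

lemma two_mem_cutDegrees {V : Type} [Fintype V] {G : SimpleGraph V} (h : HasCyclicHom 2 G) :
    2 ∈ cutDegrees G := by
  classical
  obtain ⟨c, hc⟩ := h
  refine ⟨fun _ => 1, ?_, ?_⟩
  · convert add_mem (cutGen_mem G {v | c v = 0}) (cutGen_mem G ∅) using 1
    refine Prod.ext (funext ?_) ?_
    · rintro ⟨e, he⟩
      induction e using Sym2.ind with
      | _ a b =>
        have key : ∀ y z : ZMod 2, y - z = 1 ∨ z - y = 1 →
            (1 : ℤ) = if (y = 0 ↔ z = 0) then 0 else 1 := by decide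
        simpa [cutVec_empty, cutVec_mk] using key _ _ (hc a b he)
    · norm_num
  · convert const_mem_interior G (t := 2) (by norm_num) using 1
    simp [toRealCut]

/-- The three colour classes of a `3`-colouring cut every edge exactly twice. -/
lemma const_two_three_mem {V : Type} {G : SimpleGraph V} (h : HasCyclicHom 3 G) :
    ((fun _ => 2, 3) : (G.edgeSet → ℤ) × ℤ) ∈ cutMonoid G := by
  classical
  obtain ⟨c, hc⟩ := h
  convert sum_mem (fun (i : ZMod 3) (_ : i ∈ Finset.univ) => cutGen_mem G {v | c v = i}) using 1
  refine Prod.ext (funext ?_) ?_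
  · rintro ⟨e, he⟩
    induction e using Sym2.ind with
    | _ a b =>
      have key : ∀ y z : ZMod 3, y - z = 1 ∨ z - y = 1 →
          (2 : ℤ) = ∑ i : ZMod 3, if (y = i ↔ z = i) then 0 else 1 := by decide
      simp only [Prod.fst_sum, Finset.sum_apply, cutVec_mk, Set.mem_ofPred_eq]
      convert key _ _ (hc a b he)
  · simp [Prod.snd_sum]

lemma four_mem_cutDegrees {V : Type} [Fintype V] {G : SimpleGraph V} (h : HasCyclicHom 3 G) :
    4 ∈ cutDegrees G := by
  refine ⟨fun _ => 2, ?_, ?_⟩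
  · convert add_mem (const_two_three_mem h) (cutGen_mem G ∅) using 1
    refine Prod.ext (funext fun e => ?_) ?_
    · simp [cutVec_empty]
    · norm_num
  · convert const_mem_interior G (t := 4) (by norm_num) using 1
    refine Prod.ext (funext fun e => ?_) ?_ <;> norm_num [toRealCut]

/-- A homomorphism to the `5`-cycle pulls its five maximum cuts back to five cuts covering every
edge exactly four times. Averaging the resulting point `(4, 5)` with the centre of the cone shows
that `(2, 3)` is interior. -/
lemma three_mem_cutDegrees {V : Type} [Fintype V] {G : SimpleGraph V} (h3 : HasCyclicHom 3 G)
    (h5 : HasCyclicHom 5 G) : 3 ∈ cutDegrees G := by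
  classical
  refine ⟨fun _ => 2, const_two_three_mem h3, ?_⟩
  obtain ⟨c, hc⟩ := h5
  have hq : ∑ i : ZMod 5, (1 / 3 : ℝ) • realGen G {v | c v = i ∨ c v = i + 2} ∈ cutCone G :=
    sum_mem fun i _ => smul_realGen_mem G (by norm_num) _
  convert add_mem_interior G (const_mem_interior G (t := 4 / 3) (by norm_num)) hq using 1
  refine Prod.ext (funext ?_) ?_
  · rintro ⟨e, he⟩
    induction e using Sym2.ind with
    | _ a b =>
      have key : ∀ y z : ZMod 5, y - z = 1 ∨ z - y = 1 →
          (∑ i : ZMod 5, if ((y = i ∨ y = i + 2) ↔ (z = i ∨ z = i + 2)) then (0 : ℤ) else 1)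
            = 4 := by decide
      have hsum : ∑ i : ZMod 5, cutVec {v | c v = i ∨ c v = i + 2} s(a, b) = 4 := by
        simp only [cutVec_mk, Set.mem_ofPred_eq]
        convert key _ _ (hc a b he)
      have hsum' := congrArg (Int.cast : ℤ → ℝ) hsum
      push_cast at hsum'
      simp only [toRealCut, realGen, Prod.fst_add, Prod.fst_sum, Prod.smul_fst, Pi.add_apply,
        Finset.sum_apply, Pi.smul_apply, smul_eq_mul, ← Finset.mul_sum]
      rw [hsum']
      norm_num
  · simp [toRealCut, realGen, Prod.snd_sum]
    norm_num

/-- For a ring graph `G` with at least one edge: `m(G) = 2` if every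
induced cycle of `G` has even length; `m(G) = 3` if `G` has no triangle but has an
induced cycle of odd length; `m(G) = 4` if `G` contains a triangle. -/
theorem ring_graph_m {V : Type} [Fintype V] (G : SimpleGraph V)
    (hring : IsRingGraph G) (hedge : G.edgeSet.Nonempty) :
    ((∀ n, HasInducedCycleLen G n → Even n) → IsLeast (cutDegrees G) 2) ∧
    ((¬ HasTriangle G ∧ ∃ n, Odd n ∧ HasInducedCycleLen G n) →
      IsLeast (cutDegrees G) 3) ∧
    (HasTriangle G → IsLeast (cutDegrees G) 4) := by
  have h3 : HasCyclicHom 3 G := by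
    refine hasCyclicHom_of_isRingGraph hring fun n hn => ?_
    rcases Nat.even_or_odd n with he | ho
    · exact hasCyclicHom_cycleGraph_even (by have := hn.1; omega) he
    · exact hasCyclicHom_cycleGraph_odd (by decide) le_rfl hn.1 ho
  refine ⟨fun heven => ?_, fun ⟨htri, n, hodd, hn⟩ => ?_, fun htri => ?_⟩
  · refine ⟨two_mem_cutDegrees (hasCyclicHom_of_isRingGraph hring fun n hn => ?_),
      fun α hα => two_le_of_mem_cutDegrees hedge hα⟩
    exact hasCyclicHom_cycleGraph_even (by have := hn.1; omega) (heven n hn)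
  · refine ⟨three_mem_cutDegrees h3 (hasCyclicHom_of_isRingGraph hring fun k hk => ?_),
      fun α hα => three_le_of_mem_cutDegrees hodd hn hα⟩
    rcases Nat.even_or_odd k with he | ho
    · exact hasCyclicHom_cycleGraph_even (by have := hk.1; omega) he
    · refine hasCyclicHom_cycleGraph_odd (by decide) (by norm_num) ?_ ho
      have hk3 : k ≠ 3 := by
        rintro rfl
        obtain ⟨-, ⟨f⟩⟩ := hk
        refine htri ⟨f 0, f 1, f 2, ?_, ?_, ?_⟩ <;>
          exact f.map_rel_iff.2 (SimpleGraph.cycleGraph_adj'.2 (by decide))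
      have := hk.1
      obtain ⟨r, rfl⟩ := ho
      omega
  · exact ⟨four_mem_cutDegrees h3, fun α hα => four_le_of_mem_cutDegrees htri hα⟩
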